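/- Let B ≥ 1 and λ ∈ ℝ with 0 < λ ≤ 1, and let Λ be the (B+1)×(B+1) matrix defined in the context. For every vector β ∈ ℝ^{B+1} with nonnegative entries summing to 1 (a probability vector), the sequence of vectors Λ^m β converges entrywise, as m → ∞, to the standard basis vector e_B = (0,0,…,0,1)^T. -/

import Mathlib

open Matrix Filter

/-- The `(B+1) × (B+1)` transition matrix `Λ`: diagonal entries `1 - λ` (except the
last one, which is `1`), subdiagonal entries `λ`, all other entries `0`. -/
def Lam (B : ℕ) (lam : ℝ) : Matrix (Fin (B+1)) (Fin (B+1)) ℝ :=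
  Matrix.of fun j l =>
    if (j : ℕ) = (l : ℕ) then (if (j : ℕ) < B then 1 - lam else 1)
    else if (j : ℕ) = (l : ℕ) + 1 then lam
    else 0

/-!
`Λ` fixes `e_B` and maps `e_l` to `(1 - λ) e_l + λ e_{l+1}` for `l < B`. Hence the orbit
`x_m = Λ^m e_l` satisfies `x_{m+1} = (1 - λ) x_m + λ y_m`, where `y_m = Λ^m e_{l+1}`: when
`|1 - λ| < 1`, it is an exponential smoothing of the orbit of `e_{l+1}` and inherits its limit.
Descending from `l = B`, every `Λ^m e_l` tends to `e_B`, and linearity gives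
`Λ^m β → (∑ i, β_i) e_B`.
-/

open scoped Topology

theorem tendsto_zero_of_succ_le_mul_add {u e : ℕ → ℝ} {r : ℝ} (hr0 : 0 ≤ r) (hr1 : r < 1)
    (hu0 : ∀ n, 0 ≤ u n) (hu : ∀ n, u (n + 1) ≤ r * u n + e n)
    (he : Tendsto e atTop (𝓝 0)) : Tendsto u atTop (𝓝 0) := by
  refine tendsto_order.2 ⟨fun a ha => .of_forall fun n => ha.trans_le (hu0 n), fun ε hε => ?_⟩
  have hδ : 0 < (1 - r) * (ε / 2) := mul_pos (sub_pos.2 hr1) (half_pos hε)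
  obtain ⟨N, hN⟩ := eventually_atTop.1 (he.eventually_le_const hδ)
  -- `ε / 2` is the fixed point of `t ↦ r * t + (1 - r) * (ε / 2)`, so past `N` the excess of `u`
  -- over it decays geometrically.
  have hgeom (k : ℕ) : u (k + N) - ε / 2 ≤ r ^ k * (u N - ε / 2) := by
    have hstep (i : ℕ) : u (i + 1 + N) - ε / 2 ≤ r * (u (i + N) - ε / 2) := by
      have := hu (i + N)
      have := hN (i + N) (Nat.le_add_left N i)
      rw [Nat.add_right_comm]
      linarith
    simpa only [Nat.zero_add] using
      le_geom (u := fun k => u (k + N) - ε / 2) hr0 k fun i _ => hstep i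
  have hlim : Tendsto (fun k => r ^ k * (u N - ε / 2)) atTop (𝓝 0) := by
    simpa only [zero_mul] using (tendsto_pow_atTop_nhds_zero_of_lt_one hr0 hr1).mul_const _
  rw [← map_add_atTop_eq_nat N, eventually_map]
  filter_upwards [hlim.eventually_lt_const (half_pos hε)] with k hk
  linarith [hgeom k]

theorem tendsto_of_succ_eq_smul_add_smul {𝕜 E : Type*} [NormedField 𝕜]
    [SeminormedAddCommGroup E] [NormedSpace 𝕜 E] {r : 𝕜} (hr : ‖r‖ < 1) {x y : ℕ → E} {a : E}
    (hx : ∀ n, x (n + 1) = r • x n + (1 - r) • y n) (hy : Tendsto y atTop (𝓝 a)) :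
    Tendsto x atTop (𝓝 a) := by
  rw [tendsto_iff_norm_sub_tendsto_zero] at hy ⊢
  have hrec (n : ℕ) : ‖x (n + 1) - a‖ ≤ ‖r‖ * ‖x n - a‖ + ‖1 - r‖ * ‖y n - a‖ := calc
    ‖x (n + 1) - a‖ = ‖r • (x n - a) + (1 - r) • (y n - a)‖ := by rw [hx]; congr 1; module
    _ ≤ ‖r‖ * ‖x n - a‖ + ‖1 - r‖ * ‖y n - a‖ := by
      simpa only [norm_smul] using norm_add_le (r • (x n - a)) ((1 - r) • (y n - a))
  refine tendsto_zero_of_succ_le_mul_add (norm_nonneg r) hr (fun n => norm_nonneg _) hrec ?_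
  simpa only [mul_zero] using hy.const_mul ‖1 - r‖

section Lam

variable {B : ℕ} {lam : ℝ}

theorem Lam_mulVec_single_last :
    Lam B lam *ᵥ Pi.single (Fin.last B) 1 = Pi.single (Fin.last B) 1 := by
  ext i
  simp only [mulVec_single_one, col_apply, Lam, of_apply, Pi.single_apply, Fin.ext_iff,
    Fin.val_last]
  grind

theorem Lam_mulVec_single_castSucc (l : Fin B) :
    Lam B lam *ᵥ Pi.single l.castSucc 1 =
      (1 - lam) • Pi.single l.castSucc 1 + lam • Pi.single l.succ 1 := by
  ext i
  simp only [mulVec_single_one, col_apply, Lam, of_apply, Pi.add_apply, Pi.smul_apply,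
    Pi.single_apply, Fin.ext_iff, Fin.val_castSucc, Fin.val_succ, smul_eq_mul]
  grind

theorem Lam_pow_mulVec_single_last (m : ℕ) :
    Lam B lam ^ m *ᵥ Pi.single (Fin.last B) 1 = Pi.single (Fin.last B) 1 := by
  induction m with
  | zero => rw [pow_zero, one_mulVec]
  | succ m ih => rw [pow_succ, ← mulVec_mulVec, Lam_mulVec_single_last, ih]

theorem Lam_pow_succ_mulVec_single_castSucc (l : Fin B) (m : ℕ) :
    Lam B lam ^ (m + 1) *ᵥ Pi.single l.castSucc 1 =
      (1 - lam) • (Lam B lam ^ m *ᵥ Pi.single l.castSucc 1) +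
        lam • (Lam B lam ^ m *ᵥ Pi.single l.succ 1) := by
  rw [pow_succ, ← mulVec_mulVec, Lam_mulVec_single_castSucc, mulVec_add, mulVec_smul, mulVec_smul]

theorem Lam_pow_mulVec_single_tendsto (hlam : |1 - lam| < 1) (l : Fin (B + 1)) :
    Tendsto (fun m : ℕ => Lam B lam ^ m *ᵥ Pi.single l 1) atTop
      (𝓝 (Pi.single (Fin.last B) 1)) := by
  induction l using Fin.reverseInduction with
  | last => simpa only [Lam_pow_mulVec_single_last] using tendsto_const_nhds
  | cast l ih =>
    refine tendsto_of_succ_eq_smul_add_smul (𝕜 := ℝ) hlam (fun m => ?_) ih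
    rw [Lam_pow_succ_mulVec_single_castSucc, sub_sub_cancel]

theorem Lam_pow_mulVec_tendsto_general (hlam : |1 - lam| < 1) (beta : Fin (B + 1) → ℝ) :
    Tendsto (fun m : ℕ => Lam B lam ^ m *ᵥ beta) atTop
      (𝓝 (Pi.single (Fin.last B) (∑ i, beta i))) := by
  have hdecomp (m : ℕ) :
      Lam B lam ^ m *ᵥ beta = ∑ i, beta i • (Lam B lam ^ m *ᵥ Pi.single i 1) := by
    simp only [mulVec_single_one, mulVec_eq_sum beta, op_smul_eq_smul]
    rfl
  have hlimit : (Pi.single (Fin.last B) (∑ i, beta i) : Fin (B + 1) → ℝ) =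
      ∑ i, beta i • Pi.single (Fin.last B) 1 := by
    rw [← Finset.sum_smul, ← Pi.single_smul, smul_eq_mul, mul_one]
  simp only [hdecomp, hlimit]
  exact tendsto_finsetSum _ fun i _ => (Lam_pow_mulVec_single_tendsto hlam i).const_smul (beta i)

end Lam

/-- For 0 < λ ≤ 1 and any probability vector β, the vectors (Λ^m) β converge
entrywise to the standard basis vector (0, …, 0, 1). -/
theorem Lam_pow_mulVec_tendsto (B : ℕ) (hB : 1 ≤ B) (lam : ℝ)
    (h0 : 0 < lam) (h1 : lam ≤ 1) (beta : Fin (B+1) → ℝ)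
    (hnonneg : ∀ i, 0 ≤ beta i) (hsum : ∑ i, beta i = 1) (j : Fin (B+1)) :
    Filter.Tendsto (fun m : ℕ => ((Lam B lam ^ m).mulVec beta) j) Filter.atTop
      (nhds (if j = Fin.last B then 1 else 0)) := by
  have hlam : |1 - lam| < 1 := abs_lt.2 ⟨by linarith, by linarith⟩
  simpa only [hsum, Pi.single_apply] using
    tendsto_pi_nhds.1 (Lam_pow_mulVec_tendsto_general hlam beta) j
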